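/- Let Φ = {γ ∈ ℝ : γ ≥ 0 and limsup_{k→∞} |cos k|^(k^γ) = 1}, where k ranges over the positive integers. Then sup Φ = 2·μ(π) − 2, where μ(π) is the irrationality measure of π. -/

import Mathlib

open Filter Real

/-- The irrationality measure of `α`: the infimum of the set of real `μ` such that
only finitely many rationals `p/q` (in lowest terms, `q ≥ 1`) satisfy
`0 < |α - p/q| < 1/q^μ`. -/
noncomputable def irrationalityMeasure (α : ℝ) : ℝ :=
  sInf {μ : ℝ |
    {r : ℚ | 0 < |α - (r : ℝ)| ∧ |α - (r : ℝ)| < 1 / (r.den : ℝ) ^ μ}.Finite}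


namespace PiMeasure

/-- Gaussian integers inside `ℂ`. -/
def GI (z : ℂ) : Prop := ∃ u v : ℤ, z = u + v * Complex.I

lemma GI.add {z w : ℂ} (hz : GI z) (hw : GI w) : GI (z + w) := by
  obtain ⟨a, b, rfl⟩ := hz
  obtain ⟨c, d, rfl⟩ := hw
  exact ⟨a + c, b + d, by push_cast; ring⟩

lemma GI.mul {z w : ℂ} (hz : GI z) (hw : GI w) : GI (z * w) := by
  obtain ⟨a, b, rfl⟩ := hz
  obtain ⟨c, d, rfl⟩ := hw
  refine ⟨a * c - b * d, a * d + b * c, ?_⟩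
  push_cast
  linear_combination (b * d : ℂ) * Complex.I_sq

lemma GI.int (a : ℤ) : GI (a : ℂ) := ⟨a, 0, by simp⟩
lemma GI.nat (a : ℕ) : GI (a : ℂ) := ⟨a, 0, by simp⟩
lemma GI.I : GI Complex.I := ⟨0, 1, by simp⟩

lemma GI.pow {z : ℂ} (hz : GI z) (n : ℕ) : GI (z ^ n) := by
  induction n with
  | zero => simpa using GI.nat 1
  | succ n ih => rw [pow_succ]; exact ih.mul hz

lemma GI.one_le_norm {z : ℂ} (hz : GI z) (h0 : z ≠ 0) : 1 ≤ ‖z‖ := by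
  obtain ⟨u, v, rfl⟩ := hz
  have h1 : ‖(u + v * Complex.I : ℂ)‖ ^ 2 = ((u ^ 2 + v ^ 2 : ℤ) : ℝ) := by
    rw [← Complex.normSq_eq_norm_sq, Complex.normSq_apply]
    simp
    ring
  have h2 : 0 < ‖(u + v * Complex.I : ℂ)‖ ^ 2 := by positivity
  rw [h1] at h2
  have h3 : (1 : ℤ) ≤ u ^ 2 + v ^ 2 := by
    have : 0 < u ^ 2 + v ^ 2 := by exact_mod_cast h2
    omega
  have h4 : (1 : ℝ) ≤ ‖(u + v * Complex.I : ℂ)‖ ^ 2 := by rw [h1]; exact_mod_cast h3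
  nlinarith [norm_nonneg (u + v * Complex.I : ℂ)]

/-- Exponential polynomials with controlled denominators, together with the polynomial obtained by
replacing `exp (i k τ)` by `(-1)^k`. -/
inductive Rep (n d m : ℕ) : (ℝ → ℂ) → (ℝ → ℂ) → ℝ → Prop
  | basis (z : ℂ) (a k : ℕ) (ha : a ≤ m) (hk : k ≤ n) (hz : GI (z * (d : ℂ) ^ (m - a))) :
      Rep n d m
        (fun t => z * ((t : ℂ) ^ a / (a.factorial : ℂ) * Complex.exp (k * t * Complex.I)))
        (fun x => z * ((x : ℂ) ^ a / (a.factorial : ℂ) * (-1) ^ k)) ‖z‖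
  | add (f g f' g' : ℝ → ℂ) (B C : ℝ) (h1 : Rep n d m f f' B) (h2 : Rep n d m g g' C) :
      Rep n d m (fun t => f t + g t) (fun t => f' t + g' t) (B + C)
  | mono (f f' : ℝ → ℂ) (B C : ℝ) (h1 : Rep n d m f f' B) (h : B ≤ C) : Rep n d m f f' C

lemma Rep.continuous {n d m : ℕ} {f h : ℝ → ℂ} {B : ℝ} (H : Rep n d m f h B) : Continuous f := by
  induction H with
  | basis z a k ha hk hz => fun_prop
  | add f g f' g' B C h1 h2 i1 i2 => exact i1.add i2
  | mono f f' B C h1 h i => exact i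

lemma Rep.eq_pi {n d m : ℕ} {f h : ℝ → ℂ} {B : ℝ} (H : Rep n d m f h B) : f π = h π := by
  induction H with
  | basis z a k ha hk hz =>
    have : Complex.exp (k * (π : ℝ) * Complex.I) = (-1) ^ k := by
      rw [mul_assoc, Complex.exp_nat_mul, Complex.exp_pi_mul_I]
    simp only [this]
  | add f g f' g' B C h1 h2 i1 i2 => simp only [i1, i2]
  | mono f f' B C h1 h i => exact i

lemma Rep.cast {n d m : ℕ} {f h : ℝ → ℂ} {B : ℝ} (H : Rep n d m f h B) {g : ℝ → ℂ} {C : ℝ}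
    (hg : ∀ t, g t = f t) (hB : B ≤ C) : ∃ h', Rep n d m g h' C := by
  have : g = f := funext hg
  subst this
  exact ⟨h, Rep.mono _ _ _ _ H hB⟩

lemma Rep.nonneg {n d m : ℕ} {f h : ℝ → ℂ} {B : ℝ} (H : Rep n d m f h B) : 0 ≤ B := by
  induction H with
  | basis z a k ha hk hz => positivity
  | add f g f' g' B C h1 h2 i1 i2 => positivity
  | mono f f' B C h1 h i => linarith

lemma Rep.gi {n d m : ℕ} {f h : ℝ → ℂ} {B : ℝ} (H : Rep n d m f h B) (p : ℤ) (q : ℕ)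
    (hq : q ≠ 0) (x : ℝ) (hx : x = p / q) :
    GI ((m.factorial : ℂ) * (d : ℂ) ^ m * (q : ℂ) ^ m * h x) := by
  induction H with
  | basis z a k ha hk hz =>
    have hd : (d : ℂ) ^ m = (d : ℂ) ^ (m - a) * (d : ℂ) ^ a := by
      rw [← pow_add]; congr 1; omega
    have hqm : (q : ℂ) ^ m = (q : ℂ) ^ (m - a) * (q : ℂ) ^ a := by
      rw [← pow_add]; congr 1; omega
    obtain ⟨c, hc⟩ := Nat.factorial_dvd_factorial ha
    have hq' : (q : ℂ) ≠ 0 := by exact_mod_cast hq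
    have hf : (a.factorial : ℂ) ≠ 0 := by exact_mod_cast a.factorial_ne_zero
    have : (m.factorial : ℂ) * (d : ℂ) ^ m * (q : ℂ) ^ m *
        (z * ((x : ℂ) ^ a / (a.factorial : ℂ) * (-1) ^ k)) =
        (z * (d : ℂ) ^ (m - a)) * ((c : ℂ) * (d : ℂ) ^ a * (q : ℂ) ^ (m - a) * (p : ℂ) ^ a *
          ((-1 : ℤ) : ℂ) ^ k) := by
      rw [hd, hqm, hc, hx]
      push_cast
      rw [div_pow]
      field_simp
    rw [this]
    exact hz.mul (((((GI.nat c).mul ((GI.nat d).pow a)).mul ((GI.nat q).pow _)).mul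
      ((GI.int p).pow a)).mul ((GI.int _).pow k))
  | add f g f' g' B C h1 h2 i1 i2 => simp only [mul_add]; exact i1.add i2
  | mono f f' B C h1 h i => exact i

lemma Rep.lip {n d m : ℕ} {f h : ℝ → ℂ} {B : ℝ} (H : Rep n d m f h B) (x y : ℝ)
    (hx : |x| ≤ 5) (hy : |y| ≤ 5) : ‖h x - h y‖ ≤ B * (m * 5 ^ m) * |x - y| := by
  induction H with
  | basis z a k ha hk hz =>
    have e : z * ((x : ℂ) ^ a / (a.factorial : ℂ) * (-1) ^ k) -
        z * ((y : ℂ) ^ a / (a.factorial : ℂ) * (-1) ^ k) =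
        z * (((x ^ a - y ^ a : ℝ) : ℂ) / (a.factorial : ℂ) * (-1) ^ k) := by
      push_cast; ring
    rw [e, norm_mul, norm_mul, norm_div, norm_pow, norm_neg, norm_one, one_pow, mul_one,
      Complex.norm_real, Complex.norm_natCast, Real.norm_eq_abs]
    have h1 : |x ^ a - y ^ a| ≤ |x - y| * a * (max |x| |y|) ^ (a - 1) := abs_pow_sub_pow_le x y a
    have h2 : (max |x| |y|) ^ (a - 1) ≤ 5 ^ m := by
      calc (max |x| |y|) ^ (a - 1) ≤ 5 ^ (a - 1) := by
            gcongr; exact max_le hx hy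
        _ ≤ 5 ^ m := by gcongr; norm_num; omega
    have h3 : (1 : ℝ) ≤ a.factorial := by exact_mod_cast a.factorial_pos
    have h4 : |x ^ a - y ^ a| / a.factorial ≤ |x ^ a - y ^ a| := div_le_self (abs_nonneg _) h3
    have h5 : |x ^ a - y ^ a| ≤ |x - y| * m * 5 ^ m := by
      refine h1.trans ?_
      gcongr
    rw [mul_assoc]
    gcongr
    linarith
  | add f g f' g' B C h1 h2 i1 i2 =>
    have : f' x + g' x - (f' y + g' y) = (f' x - f' y) + (g' x - g' y) := by ring
    rw [this]
    refine (norm_add_le _ _).trans ?_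
    linarith
  | mono f f' B C h1 h i =>
    refine i.trans ?_
    gcongr

lemma Rep.smul {n d m : ℕ} {f h : ℝ → ℂ} {B : ℝ} (H : Rep n d m f h B) (c : ℤ) :
    Rep n d m (fun t => c * f t) (fun t => c * h t) (|(c : ℝ)| * B) := by
  induction H with
  | basis z a k ha hk hz =>
    have := Rep.basis (n := n) (d := d) (m := m) (c * z) a k ha hk
      (by rw [mul_assoc]; exact (GI.int c).mul hz)
    convert this using 1
    · funext t; ring
    · funext t; ring
    · rw [norm_mul, Complex.norm_intCast]
  | add f g f' g' B C h1 h2 i1 i2 =>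
    have := Rep.add _ _ _ _ _ _ i1 i2
    convert this using 1
    · funext t; ring
    · funext t; ring
    · ring
  | mono f f' B C h1 h i => exact Rep.mono _ _ _ _ i (by gcongr)

/-- Convolution with `exp (i l t)`. -/
noncomputable def conv (l : ℕ) (f : ℝ → ℂ) (t : ℝ) : ℂ :=
  ∫ s in (0 : ℝ)..t, Complex.exp (l * (t - s) * Complex.I) * f s

lemma conv_same (k a : ℕ) (z : ℂ) (t : ℝ) :
    conv k (fun t => z * ((t : ℂ) ^ a / (a.factorial : ℂ) * Complex.exp (k * t * Complex.I))) t
      = z * ((t : ℂ) ^ (a + 1) / ((a + 1).factorial : ℂ) * Complex.exp (k * t * Complex.I)) := by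
  unfold conv
  have hf : (a.factorial : ℂ) ≠ 0 := by exact_mod_cast a.factorial_ne_zero
  have ha : ((a : ℂ) + 1) ≠ 0 := by exact_mod_cast a.succ_ne_zero
  have e : ∀ s : ℝ, Complex.exp (k * (t - s) * Complex.I) *
      (z * ((s : ℂ) ^ a / (a.factorial : ℂ) * Complex.exp (k * s * Complex.I))) =
      (z * Complex.exp (k * t * Complex.I) / (a.factorial : ℂ)) * ((s ^ a : ℝ) : ℂ) := by
    intro s
    have : Complex.exp (k * t * Complex.I) =
      Complex.exp (k * (t - s) * Complex.I) * Complex.exp (k * s * Complex.I) := by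
      rw [← Complex.exp_add]; congr 1; ring
    rw [this]; push_cast; ring
  simp only [e]
  rw [intervalIntegral.integral_const_mul, intervalIntegral.integral_ofReal, integral_pow]
  rw [Nat.factorial_succ]
  push_cast
  field_simp
  simp

lemma conv_diff (k l a : ℕ) (hkl : k ≠ l) (z : ℂ) (t : ℝ) :
    conv l (fun t => z * ((t : ℂ) ^ (a + 1) / ((a + 1).factorial : ℂ)
        * Complex.exp (k * t * Complex.I))) t
      = z / ((k - l) * Complex.I) * ((t : ℂ) ^ (a + 1) / ((a + 1).factorial : ℂ)
          * Complex.exp (k * t * Complex.I)) +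
        conv l (fun t => (-(z / ((k - l) * Complex.I))) * ((t : ℂ) ^ a / (a.factorial : ℂ)
          * Complex.exp (k * t * Complex.I))) t := by
  have hw : ((k : ℂ) - l) * Complex.I ≠ 0 := by
    refine mul_ne_zero (sub_ne_zero.2 ?_) Complex.I_ne_zero
    exact_mod_cast hkl
  rw [← sub_eq_iff_eq_add]
  unfold conv
  rw [← intervalIntegral.integral_sub (by apply Continuous.intervalIntegrable; fun_prop)
    (by apply Continuous.intervalIntegrable; fun_prop)]
  have key : ∀ s : ℝ, HasDerivAt (fun s : ℝ => z / ((k - l) * Complex.I) *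
      ((s : ℂ) ^ (a + 1) / ((a + 1).factorial : ℂ)
          * Complex.exp (l * (t - s) * Complex.I + k * s * Complex.I)))
      (Complex.exp (l * (t - s) * Complex.I) * (z * ((s : ℂ) ^ (a + 1) / ((a + 1).factorial : ℂ)
        * Complex.exp (k * s * Complex.I))) -
       Complex.exp (l * (t - s) * Complex.I) * ((-(z / ((k - l) * Complex.I))) *
        ((s : ℂ) ^ a / (a.factorial : ℂ) * Complex.exp (k * s * Complex.I)))) s := by
    intro s
    have h1 : HasDerivAt (fun s : ℂ => z / ((k - l) * Complex.I) *
      (s ^ (a + 1) / ((a + 1).factorial : ℂ)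
          * Complex.exp (l * (t - s) * Complex.I + k * s * Complex.I)))
      (z / ((k - l) * Complex.I) * (((a + 1 : ℕ) * (s : ℂ) ^ a * 1) / ((a + 1).factorial : ℂ)
          * Complex.exp (l * (t - s) * Complex.I + k * s * Complex.I)
        + (s : ℂ) ^ (a + 1) / ((a + 1).factorial : ℂ) *
          (Complex.exp (l * (t - s) * Complex.I + k * s * Complex.I) *
            (l * (-1) * Complex.I + k * 1 * Complex.I)))) (s : ℂ) := by
      refine HasDerivAt.const_mul _ (HasDerivAt.mul ?_ ?_)
      · exact ((hasDerivAt_id (s : ℂ)).pow (a + 1)).div_const _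
      · refine HasDerivAt.cexp (HasDerivAt.add ?_ ?_)
        · exact (((hasDerivAt_id (s : ℂ)).const_sub _).const_mul _).mul_const _
        · exact ((hasDerivAt_id (s : ℂ)).const_mul _).mul_const _
    convert h1.comp_ofReal using 1
    rw [Complex.exp_add, Nat.factorial_succ]
    have hf : (a.factorial : ℂ) ≠ 0 := by exact_mod_cast a.factorial_ne_zero
    have ha : ((a : ℂ) + 1) ≠ 0 := by exact_mod_cast a.succ_ne_zero
    have hkl' : ((k : ℂ) - l) ≠ 0 := left_ne_zero_of_mul hw
    have hI := Complex.I_ne_zero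
    push_cast
    field_simp
    ring
  rw [intervalIntegral.integral_eq_sub_of_hasDerivAt (fun s _ => key s)
    (by apply Continuous.intervalIntegrable; fun_prop)]
  simp

lemma conv_diff_zero (k l : ℕ) (hkl : k ≠ l) (z : ℂ) (t : ℝ) :
    conv l (fun t => z * ((t : ℂ) ^ 0 / ((Nat.factorial 0 : ℕ) : ℂ)
        * Complex.exp (k * t * Complex.I))) t
      = z / ((k - l) * Complex.I) * ((t : ℂ) ^ 0 / ((Nat.factorial 0 : ℕ) : ℂ)
          * Complex.exp (k * t * Complex.I)) +
        (-(z / ((k - l) * Complex.I))) * ((t : ℂ) ^ 0 / ((Nat.factorial 0 : ℕ) : ℂ)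
          * Complex.exp (l * t * Complex.I)) := by
  have hw : ((k : ℂ) - l) * Complex.I ≠ 0 := by
    refine mul_ne_zero (sub_ne_zero.2 ?_) Complex.I_ne_zero
    exact_mod_cast hkl
  unfold conv
  have key : ∀ s : ℝ, HasDerivAt (fun s : ℝ => z / ((k - l) * Complex.I) *
          Complex.exp (l * (t - s) * Complex.I + k * s * Complex.I))
      (Complex.exp (l * (t - s) * Complex.I) * (z * ((s : ℂ) ^ 0 / ((Nat.factorial 0 : ℕ) : ℂ)
        * Complex.exp (k * s * Complex.I)))) s := by
    intro s
    have h1 : HasDerivAt (fun s : ℂ => z / ((k - l) * Complex.I) *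
          Complex.exp (l * (t - s) * Complex.I + k * s * Complex.I))
      (z / ((k - l) * Complex.I) * 
          (Complex.exp (l * (t - s) * Complex.I + k * s * Complex.I) *
            (l * (-1) * Complex.I + k * 1 * Complex.I))) (s : ℂ) := by
      refine HasDerivAt.const_mul _ ?_
      refine HasDerivAt.cexp (HasDerivAt.add ?_ ?_)
      · exact (((hasDerivAt_id (s : ℂ)).const_sub _).const_mul _).mul_const _
      · exact ((hasDerivAt_id (s : ℂ)).const_mul _).mul_const _
    convert h1.comp_ofReal using 1
    rw [Complex.exp_add]
    have hkl' : ((k : ℂ) - l) ≠ 0 := left_ne_zero_of_mul hw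
    have hI := Complex.I_ne_zero
    simp
    field_simp
    ring
  rw [intervalIntegral.integral_eq_sub_of_hasDerivAt (fun s _ => key s)
    (by apply Continuous.intervalIntegrable; fun_prop)]
  simp
  ring

lemma gi_div {n d : ℕ} (hd : ∀ j, 1 ≤ j → j ≤ n → j ∣ d) {k l : ℕ} (hk : k ≤ n) (hl : l ≤ n)
    (hkl : k ≠ l) : GI ((d : ℂ) / (((k : ℂ) - l) * Complex.I)) ∧
      1 ≤ ‖((k : ℂ) - l) * Complex.I‖ := by
  have hw : ((k : ℂ) - l) ≠ 0 := by
    refine (sub_ne_zero.2 ?_)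
    exact_mod_cast hkl
  have hI := Complex.I_ne_zero
  constructor
  · have : ((k : ℤ) - l) ∣ (d : ℤ) := by
      rw [← Int.natAbs_dvd]
      have := hd ((k : ℤ) - l).natAbs (by omega) (by omega)
      exact_mod_cast this
    obtain ⟨c, hc⟩ := this
    have hc' : (d : ℂ) = (k - l) * c := by exact_mod_cast congrArg (Int.cast : ℤ → ℂ) hc
    have : (d : ℂ) / (((k : ℂ) - l) * Complex.I) = ((-c : ℤ) : ℂ) * Complex.I := by
      rw [hc']; push_cast; field_simp; simp
    rw [this]
    exact (GI.int _).mul GI.I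
  · have : GI (((k : ℂ) - l) * Complex.I) := by
      have := (GI.int ((k : ℤ) - l)).mul GI.I
      simpa using this
    exact this.one_le_norm (mul_ne_zero hw hI)

lemma Rep.conv_basis {n d : ℕ} (hd : ∀ j, 1 ≤ j → j ≤ n → j ∣ d) (m k l : ℕ) (hk : k ≤ n)
    (hl : l ≤ n) (a : ℕ) : ∀ (z : ℂ) (_ : a ≤ m) (_ : GI (z * (d : ℂ) ^ (m - a))),
    ∃ h', Rep n d (m + 1) (conv l
      (fun t => z * ((t : ℂ) ^ a / (a.factorial : ℂ) * Complex.exp (k * t * Complex.I)))) h'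
        ((a + 2) * ‖z‖) := by
  by_cases hkl : k = l
  · subst hkl
    intro z ha hz
    have := Rep.basis (n := n) (d := d) (m := m + 1) z (a + 1) k (by omega) hk
      (by rwa [Nat.add_sub_add_right])
    refine this.cast (fun t => conv_same k a z t) ?_
    · nlinarith [norm_nonneg z]
  · obtain ⟨g1, g2⟩ := gi_div hd hk hl hkl
    have hzw : ∀ z : ℂ, ‖z / (((k : ℂ) - l) * Complex.I)‖ ≤ ‖z‖ := by
      intro z
      rw [norm_div]
      exact div_le_self (norm_nonneg _) g2
    induction a with
    | zero =>
      intro z ha hz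
      have hz1 : GI (z / (((k : ℂ) - l) * Complex.I) * (d : ℂ) ^ (m + 1 - 0)) := by
        have := hz.mul g1
        convert this using 1
        simp only [Nat.sub_zero]
        ring
      have hz2 : GI (-(z / (((k : ℂ) - l) * Complex.I)) * (d : ℂ) ^ (m + 1 - 0)) := by
        have := (GI.int (-1)).mul hz1
        convert this using 1
        push_cast
        ring
      have r1 := Rep.basis (n := n) (d := d) (m := m + 1) _ 0 k (by omega) hk hz1
      have r2 := Rep.basis (n := n) (d := d) (m := m + 1) _ 0 l (by omega) hl hz2
      have r3 := Rep.add _ _ _ _ _ _ r1 r2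
      refine r3.cast (fun t => conv_diff_zero k l hkl z t) ?_
      · rw [norm_neg]
        have := hzw z
        push_cast
        linarith
    | succ a ih =>
      intro z ha hz
      have hz1 : GI (z / (((k : ℂ) - l) * Complex.I) * (d : ℂ) ^ (m + 1 - (a + 1))) := by
        have := hz.mul g1
        convert this using 1
        have e : m + 1 - (a + 1) = (m - (a + 1)) + 1 := by omega
        rw [e, pow_succ]
        ring
      have hz2 : GI (-(z / (((k : ℂ) - l) * Complex.I)) * (d : ℂ) ^ (m - a)) := by
        have := (GI.int (-1)).mul hz1
        convert this using 1
        rw [Nat.add_sub_add_right]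
        push_cast
        ring
      have r1 := Rep.basis (n := n) (d := d) (m := m + 1) _ (a + 1) k (by omega) hk hz1
      obtain ⟨h', r2⟩ := ih _ (by omega) hz2
      have r3 := Rep.add _ _ _ _ _ _ r1 r2
      refine r3.cast (fun t => conv_diff k l a hkl z t) ?_
      · rw [norm_neg]
        have := hzw z
        push_cast
        nlinarith [norm_nonneg z]

lemma conv_add (l : ℕ) {f g : ℝ → ℂ} (hf : Continuous f) (hg : Continuous g) (t : ℝ) :
    conv l (fun t => f t + g t) t = conv l f t + conv l g t := by
  unfold conv
  rw [← intervalIntegral.integral_add (by apply Continuous.intervalIntegrable; fun_prop)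
    (by apply Continuous.intervalIntegrable; fun_prop)]
  simp only [mul_add]

lemma Rep.conv {n d m : ℕ} (hd : ∀ j, 1 ≤ j → j ≤ n → j ∣ d) {f h : ℝ → ℂ} {B : ℝ}
    (H : Rep n d m f h B) (l : ℕ) (hl : l ≤ n) :
    ∃ h', Rep n d (m + 1) (conv l f) h' ((m + 2) * B) := by
  induction H with
  | basis z a k ha hk hz =>
    obtain ⟨h', r⟩ := Rep.conv_basis hd m k l hk hl a z ha hz
    exact ⟨h', Rep.mono _ _ _ _ r (by gcongr)⟩
  | add f g f' g' B C h1 h2 i1 i2 =>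
    obtain ⟨a, ha⟩ := i1
    obtain ⟨b, hb⟩ := i2
    exact (Rep.add _ _ _ _ _ _ ha hb).cast
      (fun t => conv_add l h1.continuous h2.continuous t) (by linarith)
  | mono f f' B C h1 h i =>
    obtain ⟨a, ha⟩ := i
    exact ⟨a, Rep.mono _ _ _ _ ha (by gcongr)⟩

lemma Rep.zero (n d m : ℕ) : Rep n d m (fun _ => 0) (fun _ => 0) 0 := by
  have := Rep.basis (n := n) (d := d) (m := m) 0 0 0 (by omega) (by omega)
    (by simpa using GI.nat 0)
  simpa using this

lemma Rep.sum {n d m : ℕ} (s : Finset ℕ) (f : ℕ → ℝ → ℂ) (B : ℕ → ℝ)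
    (H : ∀ l ∈ s, ∃ h, Rep n d m (f l) h (B l)) :
    ∃ h, Rep n d m (fun t => ∑ l ∈ s, f l t) h (∑ l ∈ s, B l) := by
  induction s using Finset.induction_on with
  | empty => exact ⟨_, by simpa using Rep.zero n d m⟩
  | insert a s ha ih =>
    obtain ⟨h1, r1⟩ := H a (Finset.mem_insert_self _ _)
    obtain ⟨h2, r2⟩ := ih (fun l hl => H l (Finset.mem_insert_of_mem hl))
    exact (Rep.add _ _ _ _ _ _ r1 r2).cast
      (fun t => by rw [Finset.sum_insert ha]) (by rw [Finset.sum_insert ha])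

/-- Iterated convolution of `(exp (i t) - 1)^n`. -/
noncomputable def G (n : ℕ) : ℕ → ℝ → ℂ
  | 0 => fun t => (Complex.exp (t * Complex.I) - 1) ^ n
  | m + 1 => fun t => ∫ s in (0 : ℝ)..t, (Complex.exp ((t - s) * Complex.I) - 1) ^ n * G n m s

/-- binomial coefficients with sign -/
def cf (n l : ℕ) : ℤ := (-1) ^ (n - l) * n.choose l

lemma expand (n : ℕ) (x : ℂ) : (Complex.exp (x * Complex.I) - 1) ^ n =
    ∑ l ∈ Finset.range (n + 1), (cf n l : ℂ) * Complex.exp (l * x * Complex.I) := by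
  rw [sub_eq_add_neg, add_pow]
  refine Finset.sum_congr rfl fun l _ => ?_
  rw [← Complex.exp_nat_mul, cf]
  push_cast
  rw [mul_assoc (l : ℂ)]
  ring

lemma cf_sum (n : ℕ) (c : ℝ) : ∑ l ∈ Finset.range (n + 1), |(cf n l : ℝ)| * c = 2 ^ n * c := by
  rw [← Finset.sum_mul]
  congr 1
  have := Nat.sum_range_choose n
  have h2 : (∑ l ∈ Finset.range (n + 1), (n.choose l : ℝ)) = 2 ^ n := by exact_mod_cast this
  rw [← h2]
  refine Finset.sum_congr rfl fun l _ => ?_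
  rw [cf]
  push_cast
  rw [abs_mul, abs_pow, abs_neg, abs_one, one_pow, one_mul, Nat.abs_cast]

lemma rep_G {n d : ℕ} (hd : ∀ j, 1 ≤ j → j ≤ n → j ∣ d) (m : ℕ) :
    ∃ h, Rep n d m (G n m) h ((2 ^ n) ^ (m + 1) * (m + 1).factorial) := by
  induction m with
  | zero =>
    have : ∀ l ∈ Finset.range (n + 1), ∃ h, Rep n d 0
        (fun t : ℝ => (cf n l : ℂ) * Complex.exp (l * t * Complex.I)) h (|(cf n l : ℝ)| * 1) := by
      intro l hl
      have hl' : l ≤ n := by simpa [Nat.lt_succ_iff] using hl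
      have r := (Rep.basis (n := n) (d := d) (m := 0) 1 0 l (by omega) hl'
        (by simpa using GI.nat 1)).smul (cf n l)
      exact r.cast (fun t => by simp) (by simp)
    obtain ⟨h, r⟩ := Rep.sum _ _ _ this
    refine ⟨h, ?_⟩
    rw [cf_sum] at r
    convert r using 1
    · funext t
      exact expand n t
    · simp
  | succ m ih =>
    obtain ⟨h0, r0⟩ := ih
    have : ∀ l ∈ Finset.range (n + 1), ∃ h, Rep n d (m + 1)
        (fun t : ℝ => (cf n l : ℂ) * PiMeasure.conv l (G n m) t) h
          (|(cf n l : ℝ)| * ((m + 2) * ((2 ^ n) ^ (m + 1) * (m + 1).factorial))) := by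
      intro l hl
      have hl' : l ≤ n := by simpa [Nat.lt_succ_iff] using hl
      obtain ⟨h', r⟩ := r0.conv hd l hl'
      exact ⟨_, r.smul (cf n l)⟩
    obtain ⟨h, r⟩ := Rep.sum _ _ _ this
    refine ⟨h, ?_⟩
    rw [cf_sum] at r
    have hc := r0.continuous
    convert r using 1
    · funext t
      simp only [G, PiMeasure.conv]
      simp only [← intervalIntegral.integral_const_mul]
      rw [← intervalIntegral.integral_finsetSum]
      · congr 1
        funext s
        rw [expand, Finset.sum_mul]
        refine Finset.sum_congr rfl fun l _ => ?_
        ring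
      · intro l _
        apply Continuous.intervalIntegrable
        fun_prop
    · rw [Nat.factorial_succ (m + 1)]
      push_cast
      ring

/-- The real version of `G`. -/
noncomputable def U (n : ℕ) : ℕ → ℝ → ℝ
  | 0 => fun t => (2 * sin (t / 2)) ^ n
  | m + 1 => fun t => ∫ s in (0 : ℝ)..t, (2 * sin ((t - s) / 2)) ^ n * U n m s

lemma U_cont (n m : ℕ) : Continuous (U n m) := by
  induction m with
  | zero => unfold U; fun_prop
  | succ m ih =>
    unfold U
    apply intervalIntegral.continuous_parametric_intervalIntegral_of_continuous
    · unfold Function.uncurry; fun_prop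
    · fun_prop

lemma exp_sub_one (x : ℂ) : Complex.exp (x * Complex.I) - 1 =
    Complex.I * Complex.exp (x / 2 * Complex.I) * (2 * Complex.sin (x / 2)) := by
  have h1 : Complex.exp (x * Complex.I) =
      Complex.exp (x / 2 * Complex.I) * Complex.exp (x / 2 * Complex.I) := by
    rw [← Complex.exp_add]; congr 1; ring
  have h2 : Complex.exp (x / 2 * Complex.I) * Complex.exp (-(x / 2) * Complex.I) = 1 := by
    rw [← Complex.exp_add]; simp
  rw [Complex.sin, h1]
  linear_combination h2 + (Complex.exp (x / 2 * Complex.I) * (Complex.exp (-(x / 2) * Complex.I)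
    - Complex.exp (x / 2 * Complex.I))) * (-Complex.I_sq)

lemma G_eq (n m : ℕ) (t : ℝ) : G n m t =
    Complex.I ^ (n * (m + 1)) * Complex.exp (t / 2 * Complex.I) ^ n * (U n m t : ℝ) := by
  induction m generalizing t with
  | zero =>
    simp only [G, U]
    rw [exp_sub_one]
    push_cast
    ring
  | succ m ih =>
    simp only [G, U]
    rw [← intervalIntegral.integral_ofReal, ← intervalIntegral.integral_const_mul]
    congr 1
    funext s
    rw [ih, ← Complex.ofReal_sub, exp_sub_one]
    have : Complex.exp (t / 2 * Complex.I) = Complex.exp (((t - s : ℝ) : ℂ) / 2 * Complex.I) *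
        Complex.exp (s / 2 * Complex.I) := by
      rw [← Complex.exp_add]; congr 1; push_cast; ring
    rw [this]
    push_cast
    ring

lemma norm_G (n m : ℕ) (t : ℝ) : ‖G n m t‖ = |U n m t| := by
  rw [G_eq, norm_mul, norm_mul, norm_pow, norm_pow, Complex.norm_I, one_pow, one_mul]
  have : Complex.exp (t / 2 * Complex.I) = Complex.exp (((t / 2 : ℝ) : ℂ) * Complex.I) := by
    push_cast; rfl
  rw [this, Complex.norm_exp_ofReal_mul_I, one_pow, one_mul, Complex.norm_real, Real.norm_eq_abs]

lemma amgm (m : ℕ) (a b : ℝ) (ha : 0 ≤ a) (hb : 0 ≤ b) :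
    a * (b / (m + 1)) ^ (m + 1) ≤ ((a + b) / (m + 2)) ^ (m + 2) := by
  have hm : (0 : ℝ) < m + 2 := by positivity
  have hm1 : (0 : ℝ) < m + 1 := by positivity
  have h := Real.geom_mean_le_arith_mean2_weighted (w₁ := 1 / (m + 2)) (w₂ := (m + 1) / (m + 2))
    (p₁ := a) (p₂ := b / (m + 1)) (by positivity) (by positivity) ha (by positivity)
    (by field_simp; ring)
  have e : 1 / ((m : ℝ) + 2) * a + (m + 1) / (m + 2) * (b / (m + 1)) = (a + b) / (m + 2) := by
    field_simp
  rw [e] at h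
  have h2 := pow_le_pow_left₀ (by positivity) h (m + 2)
  refine le_trans (le_of_eq ?_) h2
  rw [mul_pow, ← Real.rpow_natCast, ← Real.rpow_natCast, ← Real.rpow_natCast, ← Real.rpow_mul ha,
    ← Real.rpow_mul (by positivity)]
  push_cast
  rw [div_mul_cancel₀ _ hm.ne', div_mul_cancel₀ _ hm.ne', Real.rpow_one]

lemma two_sin_nonneg {x : ℝ} (h0 : 0 ≤ x) (h1 : x ≤ π) : 0 ≤ 2 * sin (x / 2) := by
  have := Real.sin_nonneg_of_nonneg_of_le_pi (x := x / 2) (by linarith) (by linarith [pi_pos])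
  linarith

lemma U_upper (n m : ℕ) (t : ℝ) (h0 : 0 ≤ t) (h1 : t ≤ π) :
    |U n m t| ≤ ((t / (m + 1)) ^ (m + 1)) ^ n * t ^ m := by
  induction m generalizing t with
  | zero =>
    simp only [U]
    have h2 := two_sin_nonneg h0 h1
    rw [abs_of_nonneg (by positivity)]
    simp
    gcongr
    have := Real.sin_le (x := t / 2) (by linarith)
    linarith
  | succ m ih =>
    simp only [U]
    have key : ∀ s ∈ Set.uIoc 0 t, ‖(2 * sin ((t - s) / 2)) ^ n * U n m s‖ ≤
        ((t / (m + 2)) ^ (m + 2)) ^ n * t ^ m := by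
      intro s hs
      rw [Set.uIoc_of_le h0] at hs
      obtain ⟨hs0, hs1⟩ := hs
      have i := ih s hs0.le (hs1.trans h1)
      have h2 := two_sin_nonneg (x := t - s) (by linarith) (by linarith)
      rw [norm_mul, norm_pow, Real.norm_eq_abs, Real.norm_eq_abs, abs_of_nonneg h2]
      have h3 := Real.sin_le (x := (t - s) / 2) (by linarith)
      have h4 : 2 * sin ((t - s) / 2) ≤ t - s := by linarith
      have h5 := amgm m (t - s) s (by linarith) hs0.le
      rw [sub_add_cancel] at h5
      have h6 : 0 ≤ t - s := by linarith
      calc (2 * sin ((t - s) / 2)) ^ n * |U n m s|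
          ≤ (t - s) ^ n * (((s / (m + 1)) ^ (m + 1)) ^ n * s ^ m) := by gcongr
        _ = ((t - s) * (s / (m + 1)) ^ (m + 1)) ^ n * s ^ m := by rw [mul_pow]; ring
        _ ≤ ((t / (m + 2)) ^ (m + 2)) ^ n * t ^ m := by gcongr
    have := intervalIntegral.norm_integral_le_of_norm_le_const key
    rw [Real.norm_eq_abs, sub_zero, abs_of_nonneg h0] at this
    refine this.trans (le_of_eq ?_)
    push_cast
    ring

lemma U_lower (m : ℕ) : ∃ κ : ℝ, 0 < κ ∧ κ ≤ 1 ∧ ∀ (n : ℕ) (t : ℝ), 0 ≤ t → t ≤ π →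
    κ ^ (n + 1) * t ^ (n * (m + 1) + m) ≤ U n m t := by
  have hp := pi_pos
  have hp3 := pi_gt_three
  induction m with
  | zero =>
    refine ⟨2 / π, by positivity, by rw [div_le_one hp]; linarith, fun n t h0 h1 => ?_⟩
    have h2 := Real.mul_le_sin (x := t / 2) (by linarith) (by linarith)
    have h3 : 2 / π ≤ 1 := by rw [div_le_one hp]; linarith
    simp only [U]
    calc (2 / π) ^ (n + 1) * t ^ (n * (0 + 1) + 0) = ((2 / π) * t) ^ n * (2 / π) := by
          rw [mul_pow, pow_succ, zero_add, mul_one, add_zero]; ring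
      _ ≤ ((2 / π) * t) ^ n * 1 := by gcongr
      _ = ((2 / π) * t) ^ n := mul_one _
      _ ≤ _ := pow_le_pow_left₀ (by positivity) (by linarith) n
  | succ m ih =>
    obtain ⟨κ, hκ, hκ1, H⟩ := ih
    have hc : (2 / (3 * π)) ≤ 1 := by rw [div_le_one (by positivity)]; linarith
    refine ⟨κ * (1 / 3) ^ (m + 1) * (2 / (3 * π)), by positivity, ?_, fun n t h0 h1 => ?_⟩
    · have : ((1 : ℝ) / 3) ^ (m + 1) ≤ 1 := pow_le_one₀ (by norm_num) (by norm_num)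
      calc κ * (1 / 3) ^ (m + 1) * (2 / (3 * π)) ≤ 1 * 1 * 1 := by gcongr
        _ = 1 := by norm_num
    simp only [U]
    have hcont : Continuous fun s => (2 * sin ((t - s) / 2)) ^ n * U n m s := by
      have := U_cont n m
      fun_prop
    have hnn : ∀ s, 0 ≤ s → s ≤ t → 0 ≤ (2 * sin ((t - s) / 2)) ^ n * U n m s := by
      intro s hs0 hs1
      have h2 := two_sin_nonneg (x := t - s) (by linarith) (by linarith)
      have h3 := H n s hs0 (hs1.trans h1)
      have h4 : 0 ≤ κ ^ (n + 1) * s ^ (n * (m + 1) + m) := by positivity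
      have h5 := h4.trans h3
      positivity
    have step1 : ∫ s in (t / 3)..(2 * t / 3), (2 * sin ((t - s) / 2)) ^ n * U n m s ≤
        ∫ s in (0 : ℝ)..t, (2 * sin ((t - s) / 2)) ^ n * U n m s := by
      apply intervalIntegral.integral_mono_interval (by linarith) (by linarith) (by linarith)
      · rw [EventuallyLE, MeasureTheory.ae_restrict_iff' measurableSet_Ioc]
        filter_upwards with s hs
        exact hnn s hs.1.le hs.2
      · exact hcont.intervalIntegrable _ _
    refine le_trans ?_ step1
    have step2 : ∫ s in (t / 3)..(2 * t / 3),
        ((2 / (3 * π)) * t) ^ n * (κ ^ (n + 1) * (t / 3) ^ (n * (m + 1) + m)) ≤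
        ∫ s in (t / 3)..(2 * t / 3), (2 * sin ((t - s) / 2)) ^ n * U n m s := by
      apply intervalIntegral.integral_mono_on (by linarith)
      · exact continuous_const.intervalIntegrable _ _
      · exact hcont.intervalIntegrable _ _
      · intro s hs
        have hs1 := hs.1
        have hs2 := hs.2
        have h2 := Real.mul_le_sin (x := (t - s) / 2) (by linarith) (by linarith)
        have h3 := H n s (by linarith) (by linarith)
        have h4 : (2 / (3 * π)) * t ≤ 2 * sin ((t - s) / 2) := by
          have : (2 / (3 * π)) * t = 2 * (2 / π * (t / 3 / 2)) := by field_simp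
          rw [this]
          refine le_trans ?_ (mul_le_mul_of_nonneg_left h2 (by norm_num))
          gcongr
          linarith
        have h5 : κ ^ (n + 1) * (t / 3) ^ (n * (m + 1) + m) ≤ U n m s := by
          refine le_trans ?_ h3
          gcongr
        have h6 : 0 ≤ 2 / (3 * π) * t := by positivity
        exact mul_le_mul (pow_le_pow_left₀ h6 h4 n) h5 (by positivity)
          (pow_nonneg (h6.trans h4) n)
    refine le_trans ?_ step2
    rw [intervalIntegral.integral_const, smul_eq_mul]
    have e1 : 2 * t / 3 - t / 3 = t * (1 / 3) := by ring
    rw [e1]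
    have e2 : t * (1 / 3) *
        ((2 / (3 * π) * t) ^ n * (κ ^ (n + 1) * (t / 3) ^ (n * (m + 1) + m))) =
        (κ ^ (n + 1) * ((1 / 3) ^ (m + 1)) ^ (n + 1) * (2 / (3 * π)) ^ n) *
          t ^ (n * (m + 1 + 1) + (m + 1)) := by
      rw [mul_pow, div_eq_mul_one_div t 3, mul_pow t, ← pow_mul]
      ring
    rw [e2]
    gcongr
    rw [mul_pow, mul_pow]
    gcongr ?_ * ?_
    rw [pow_succ]
    have : 0 ≤ (2 / (3 * π)) ^ n := by positivity
    nlinarith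

lemma lcm_bound (n : ℕ) : (Nat.lcmUpto n : ℝ) ≤ exp (log 4 + 4) ^ n := by
  have h := Chebyshev.psi_le_const_mul_self (x := n) (by positivity)
  rw [Chebyshev.psi_eq_log_lcmUpto] at h
  have hp : (0 : ℝ) < Nat.lcmUpto n := by exact_mod_cast Nat.lcmUpto_pos n
  rw [Real.log_le_iff_le_exp hp] at h
  refine h.trans (le_of_eq ?_)
  rw [← Real.exp_nat_mul, mul_comm]

lemma dvd_lcm (n j : ℕ) (h1 : 1 ≤ j) (h2 : j ≤ n) : j ∣ Nat.lcmUpto n := by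
  unfold Nat.lcmUpto
  exact Finset.dvd_lcm (f := id) (Finset.mem_Icc.2 ⟨h1, h2⟩)

lemma core (m n : ℕ) (p : ℤ) (q : ℕ) (hq : q ≠ 0) (hx : |((p : ℝ) / q)| ≤ 5)
    (hU : 2 * ((m.factorial : ℝ) * (Nat.lcmUpto n : ℝ) ^ m * (q : ℝ) ^ m) * |U n m π| ≤ 1) :
    |U n m π| ≤ ((2 ^ n) ^ (m + 1) * (m + 1).factorial) * (m * 5 ^ m) * |π - p / q| := by
  obtain ⟨h, r⟩ := rep_G (dvd_lcm n) m
  have hl := r.lip π (p / q) (by rw [abs_of_pos pi_pos]; linarith [pi_lt_four]) hx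
  have hg := r.gi p q hq (p / q) rfl
  rw [← r.eq_pi] at hl
  have hn := norm_G n m π
  by_cases h0 : h (p / q) = 0
  · rw [h0, sub_zero, hn] at hl
    exact hl
  · set D : ℝ := (m.factorial : ℝ) * (Nat.lcmUpto n : ℝ) ^ m * (q : ℝ) ^ m with hD
    have hd0 : (Nat.lcmUpto n : ℝ) ≠ 0 := by exact_mod_cast Nat.lcmUpto_ne_zero n
    have hDp : 0 < D := by
      have : (0 : ℝ) < Nat.lcmUpto n := by exact_mod_cast Nat.lcmUpto_pos n
      have : (0 : ℝ) < q := by exact_mod_cast Nat.pos_of_ne_zero hq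
      positivity
    have hDc : (m.factorial : ℂ) * (Nat.lcmUpto n : ℂ) ^ m * (q : ℂ) ^ m = (D : ℝ) := by
      rw [hD]; push_cast; rfl
    rw [hDc] at hg
    have h1 := hg.one_le_norm (mul_ne_zero (by exact_mod_cast hDp.ne') h0)
    rw [norm_mul, Complex.norm_real, Real.norm_eq_abs, abs_of_pos hDp] at h1
    have h2 : ‖h (p / q)‖ ≤ ‖G n m π‖ + ‖G n m π - h (p / q)‖ := by
      have := norm_sub_le (G n m π) (G n m π - h (p / q))
      simpa using this
    rw [hn] at h2
    have h3 : 2 * D * |U n m π| ≤ D * ‖h (p / q)‖ := hU.trans h1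
    have h4 : 2 * |U n m π| ≤ ‖h (p / q)‖ := by
      have : D * (2 * |U n m π|) ≤ D * ‖h (p / q)‖ := by linarith
      exact le_of_mul_le_mul_left this hDp
    linarith

lemma lower_geom : ∃ η : ℝ, 0 < η ∧ ∀ (t q : ℕ) (p : ℤ), 1 ≤ t → q ≠ 0 → q ≤ 2 ^ t →
    |((p : ℝ) / q)| ≤ 5 → η ^ t ≤ |π - p / q| := by
  set C : ℝ := exp (log 4 + 4) with hC
  have hCp : 0 < C := exp_pos _
  have hC1 : 1 ≤ C := Real.one_le_exp (by have := Real.log_nonneg (x := 4) (by norm_num); linarith)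
  have hp := pi_pos
  obtain ⟨m, hm⟩ := exists_nat_ge (2 * π * C)
  have hm1 : (1 : ℝ) ≤ m := by
    have := pi_gt_three
    nlinarith
  obtain ⟨κ, hκ, hκ1, hκU⟩ := U_lower m
  obtain ⟨L, hL⟩ := pow_unbounded_of_one_lt (2 * (m.factorial : ℝ) * π ^ m)
    (by norm_num : (1 : ℝ) < 2)
  set K := m + L with hK
  set c1 : ℝ := (m + 1).factorial * (m * 5 ^ m) with hc1
  have hc1' : 1 ≤ c1 := by
    have h1 : (1 : ℝ) ≤ (m + 1).factorial := by exact_mod_cast (m + 1).factorial_pos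
    have h2 : (1 : ℝ) ≤ 5 ^ m := one_le_pow₀ (by norm_num)
    calc (1 : ℝ) = 1 * (1 * 1) := by norm_num
      _ ≤ c1 := by rw [hc1]; gcongr
  refine ⟨κ / c1 * (κ / 2 ^ (m + 1)) ^ K, by positivity, fun t q p ht hq hqt hx => ?_⟩
  have hq0 : (0 : ℝ) < q := by exact_mod_cast Nat.pos_of_ne_zero hq
  have hqt' : (q : ℝ) ≤ 2 ^ t := by exact_mod_cast hqt
  have hup := U_upper (K * t) m π hp.le le_rfl
  have hlow := hκU (K * t) π hp.le le_rfl
  have hd := lcm_bound (K * t)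
  rw [← hC] at hd
  have hsmall : 2 * ((m.factorial : ℝ) * (Nat.lcmUpto (K * t) : ℝ) ^ m * (q : ℝ) ^ m)
      * |U (K * t) m π| ≤ 1 := by
    have e1 : C ^ m * (π / (m + 1)) ^ (m + 1) ≤ 1 / 2 := by
      calc C ^ m * (π / (m + 1)) ^ (m + 1) ≤ C ^ (m + 1) * (π / (m + 1)) ^ (m + 1) := by
            gcongr; omega
        _ = (C * (π / (m + 1))) ^ (m + 1) := by rw [mul_pow]
        _ ≤ (1 / 2) ^ (m + 1) := by
            gcongr
            rw [mul_div_assoc', div_le_iff₀ (by positivity)]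
            linarith
        _ ≤ (1 / 2) ^ 1 := pow_le_pow_of_le_one (by norm_num) (by norm_num) (by omega)
        _ = 1 / 2 := pow_one _
    calc 2 * ((m.factorial : ℝ) * (Nat.lcmUpto (K * t) : ℝ) ^ m * (q : ℝ) ^ m)
          * |U (K * t) m π|
        ≤ 2 * ((m.factorial : ℝ) * (C ^ (K * t)) ^ m * (2 ^ t) ^ m)
          * (((π / (m + 1)) ^ (m + 1)) ^ (K * t) * π ^ m) := by gcongr
      _ = (2 * (m.factorial : ℝ) * π ^ m) * (C ^ m * (π / (m + 1)) ^ (m + 1)) ^ (K * t)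
            * (2 ^ t) ^ m := by
          rw [mul_pow (C ^ m)]; ring
      _ ≤ 2 ^ L * (1 / 2) ^ (K * t) * (2 ^ t) ^ m := by gcongr
      _ ≤ (2 ^ L) ^ t * (1 / 2) ^ (K * t) * (2 ^ t) ^ m := by
          gcongr
          exact le_self_pow₀ (one_le_pow₀ (by norm_num)) (by omega)
      _ = 1 := by
          rw [hK, one_div, inv_pow, ← pow_mul, ← pow_mul, mul_right_comm, ← pow_add,
            mul_inv_eq_one₀ (by positivity)]
          congr 1
          ring
  have hc := core m (K * t) p q hq hx hsmall
  have h1 : κ ^ (K * t + 1) ≤ U (K * t) m π := by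
    refine le_trans ?_ hlow
    have : (1 : ℝ) ≤ π ^ (K * t * (m + 1) + m) := one_le_pow₀ (by linarith [pi_gt_three])
    have h2 : 0 < κ ^ (K * t + 1) := by positivity
    nlinarith
  have h2 := h1.trans ((le_abs_self _).trans hc)
  have h3 : κ ^ (K * t + 1) / ((2 ^ (m + 1)) ^ (K * t) * c1) ≤ |π - p / q| := by
    rw [div_le_iff₀ (by positivity)]
    refine h2.trans (le_of_eq ?_)
    rw [hc1]
    ring
  refine le_trans ?_ h3
  have h4 : κ / c1 ≤ 1 := by rw [div_le_one (by positivity)]; linarith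
  calc (κ / c1 * (κ / 2 ^ (m + 1)) ^ K) ^ t = (κ / c1) ^ t * (κ / 2 ^ (m + 1)) ^ (K * t) := by
        rw [mul_pow, ← pow_mul]
    _ ≤ (κ / c1) ^ 1 * (κ / 2 ^ (m + 1)) ^ (K * t) := by
        gcongr ?_ * _
        exact pow_le_pow_of_le_one (by positivity) h4 ht
    _ = κ ^ (K * t + 1) / ((2 ^ (m + 1)) ^ (K * t) * c1) := by
        rw [div_pow κ (2 ^ (m + 1)), pow_one, pow_succ]
        field_simp
        ring

theorem pi_lower : ∃ μ : ℝ, 0 < μ ∧ ∀ r : ℚ, 2 ≤ r.den → 1 / (r.den : ℝ) ^ μ ≤ |π - r| := by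
  obtain ⟨η, hη, H⟩ := lower_geom
  obtain ⟨s, hs⟩ := exists_pow_lt_of_lt_one hη (by norm_num : (1 / 2 : ℝ) < 1)
  refine ⟨(2 * s + 1 : ℕ), by positivity, fun r hr => ?_⟩
  rw [Real.rpow_natCast]
  have hd : (0 : ℝ) < r.den := by exact_mod_cast r.den_pos
  by_cases hx : |((r.num : ℝ) / r.den)| ≤ 5
  · set t := Nat.log 2 r.den + 1 with ht
    have h1 : r.den ≤ 2 ^ t := (Nat.lt_pow_succ_log_self (by norm_num) _).le
    have h2 : 2 ^ (t - 1) ≤ r.den := Nat.pow_log_le_self 2 (by omega)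
    have h3 : 1 ≤ t - 1 := Nat.log_pos (by norm_num) hr
    have h4 := H t r.den r.num (by omega) (by omega) h1 hx
    rw [← Rat.cast_def] at h4
    refine le_trans ?_ h4
    have h2' : (2 : ℝ) ^ (t - 1) ≤ r.den := by exact_mod_cast h2
    calc 1 / (r.den : ℝ) ^ (2 * s + 1) ≤ 1 / (2 ^ (t - 1)) ^ (2 * s + 1) := by gcongr
      _ = (1 / 2) ^ ((t - 1) * (2 * s + 1)) := by rw [one_div_pow, pow_mul]
      _ ≤ (1 / 2) ^ (s * t) := by
          apply pow_le_pow_of_le_one (by norm_num) (by norm_num)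
          obtain ⟨v, hv⟩ : ∃ v, t = v + 2 := ⟨t - 2, by omega⟩
          rw [hv]
          simp only [show v + 2 - 1 = v + 1 by omega]
          nlinarith
      _ = ((1 / 2) ^ s) ^ t := by rw [pow_mul]
      _ ≤ η ^ t := by gcongr
  · rw [← Rat.cast_def] at hx
    have h1 : 1 ≤ |π - r| := by
      push Not at hx
      have := abs_sub_abs_le_abs_sub (r : ℝ) π
      rw [abs_sub_comm, abs_of_pos pi_pos] at this
      linarith [pi_lt_four]
    refine le_trans ?_ h1
    rw [div_le_one (by positivity)]
    apply one_le_pow₀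
    exact_mod_cast r.den_pos

end PiMeasure

namespace PiMeasure

/-- rationals approximating `π` with exponent `μ` -/
def S (μ : ℝ) : Set ℚ := {r : ℚ | 0 < |π - (r : ℝ)| ∧ |π - (r : ℝ)| < 1 / (r.den : ℝ) ^ μ}

lemma den_ge (r : ℚ) : (1 : ℝ) ≤ r.den := by exact_mod_cast r.den_pos

lemma abs_pos (r : ℚ) : 0 < |π - (r : ℝ)| := by
  rw [_root_.abs_pos, sub_ne_zero]
  intro h
  exact irrational_pi ⟨r, h.symm⟩

lemma S_anti {μ ν : ℝ} (h : μ ≤ ν) : S ν ⊆ S μ := by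
  rintro r ⟨h1, h2⟩
  refine ⟨h1, h2.trans_le ?_⟩
  have := den_ge r
  gcongr

lemma S_finite : ∃ μ, (S μ).Finite := by
  obtain ⟨μ, hμ, H⟩ := pi_lower
  refine ⟨μ, ((Set.finite_Icc (2 : ℤ) 5).image (fun z : ℤ => (z : ℚ))).subset ?_⟩
  rintro r ⟨h1, h2⟩
  have hd : r.den = 1 := by
    by_contra hne
    have := r.den_pos
    linarith [H r (by omega)]
  have hr : ((r.num : ℤ) : ℚ) = r := Rat.coe_int_num_of_den_eq_one hd
  rw [hd] at h2
  simp only [Nat.cast_one, Real.one_rpow, div_one] at h2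
  refine ⟨r.num, ?_, hr⟩
  have hr' : (r : ℝ) = (r.num : ℝ) := by exact_mod_cast congrArg (Rat.cast : ℚ → ℝ) hr.symm
  rw [hr', abs_lt] at h2
  have p3 := pi_gt_three
  have p4 := pi_lt_four
  constructor
  · have : (2 : ℝ) < r.num := by linarith
    exact_mod_cast this.le
  · have : (r.num : ℝ) < 5 := by linarith
    exact_mod_cast this.le

lemma S_infinite {μ : ℝ} (h : μ ≤ 2) : (S μ).Infinite := by
  have h0 := Real.infinite_rat_abs_sub_lt_one_div_den_sq_of_irrational irrational_pi
  refine Set.Infinite.mono ?_ h0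
  intro r hr
  refine S_anti h ⟨abs_pos r, ?_⟩
  have : |π - r| < 1 / (r.den : ℝ) ^ 2 := hr
  rwa [← Real.rpow_natCast] at this

lemma lower_c {μ : ℝ} (hf : (S μ).Finite) (hμ : 0 ≤ μ) : ∃ c : ℝ, 0 < c ∧ ∀ (p : ℤ) (q : ℕ), 1 ≤ q →
    c / (q : ℝ) ^ μ ≤ |π - p / q| := by
  have h1 : ∃ c : ℝ, 0 < c ∧ c ≤ 1 ∧ ∀ r ∈ S μ, c ≤ |π - r| := by
    by_cases hn : (S μ).Nonempty
    · obtain ⟨a, ha, hm⟩ := Set.exists_min_image (S μ) (fun r : ℚ => |π - (r : ℝ)|) hf hn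
      refine ⟨min 1 |π - a|, lt_min one_pos (abs_pos a), min_le_left _ _, fun r hr => ?_⟩
      exact (min_le_right _ _).trans (hm r hr)
    · refine ⟨1, one_pos, le_rfl, fun r hr => (hn ⟨r, hr⟩).elim⟩
  obtain ⟨c, hc, hc1, H⟩ := h1
  have h2 : ∀ r : ℚ, c / (r.den : ℝ) ^ μ ≤ |π - r| := by
    intro r
    have hd := den_ge r
    have hd1 : 1 ≤ (r.den : ℝ) ^ μ := Real.one_le_rpow hd hμ
    by_cases hr : r ∈ S μ
    · exact (div_le_self hc.le hd1).trans (H r hr)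
    · have : ¬ (|π - (r : ℝ)| < 1 / (r.den : ℝ) ^ μ) := fun h => hr ⟨abs_pos r, h⟩
      push Not at this
      refine le_trans ?_ this
      gcongr
  refine ⟨c, hc, fun p q hq => ?_⟩
  have h3 := h2 ((p : ℚ) / q)
  have h4 : ((p : ℚ) / q).den ≤ q := by
    apply Nat.le_of_dvd hq
    have := Rat.den_dvd p q
    rw [Rat.divInt_eq_div] at this
    exact_mod_cast this
  have h5 : ((((p : ℚ) / q).den : ℕ) : ℝ) ≤ q := by exact_mod_cast h4
  have h6 := den_ge ((p : ℚ) / q)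
  push_cast at h3
  refine le_trans ?_ h3
  gcongr

lemma tendsto_zero {μ γ : ℝ} (hf : (S μ).Finite) (hμ : 1 ≤ μ) (hγ : 2 * μ - 2 < γ) :
    Tendsto (fun k : ℕ => |Real.cos k| ^ ((k : ℝ) ^ γ)) atTop (nhds 0) := by
  obtain ⟨c, hc, H⟩ := lower_c hf (by linarith)
  have p3 := pi_gt_three
  have p4 := pi_lt_four
  have hpp := pi_pos
  set A : ℝ := 2 / π ^ 2 * c ^ 2 with hA
  have hAp : 0 < A := by positivity
  have hlim : Tendsto (fun k : ℕ => exp (-(A * (k : ℝ) ^ (γ + 2 - 2 * μ)))) atTop (nhds 0) := by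
    have h1 : Tendsto (fun k : ℕ => (k : ℝ) ^ (γ + 2 - 2 * μ)) atTop atTop :=
      (tendsto_rpow_atTop (by linarith)).comp tendsto_natCast_atTop_atTop
    exact Real.tendsto_exp_neg_atTop_nhds_zero.comp (h1.const_mul_atTop hAp)
  refine squeeze_zero' (Eventually.of_forall fun k => by positivity) ?_ hlim
  filter_upwards [eventually_ge_atTop 2] with k hk
  have hk2 : (2 : ℝ) ≤ k := by exact_mod_cast hk
  have hr := abs_sub_round ((k : ℝ) / π)
  set m : ℤ := round ((k : ℝ) / π) with hm
  rw [abs_le] at hr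
  have hkp : (k : ℝ) / π * π = k := by field_simp
  have hk1 : 1 / 2 < (k : ℝ) / π := by rw [lt_div_iff₀ hpp]; linarith
  have hk3 : (k : ℝ) / π + 1 / 2 ≤ k := by
    have : (k : ℝ) / π ≤ k / 3 := by gcongr
    linarith
  have hm0 : 0 < m := by
    have : (0 : ℝ) < m := by linarith
    exact_mod_cast this
  obtain ⟨q, hq⟩ := Int.eq_ofNat_of_zero_le hm0.le
  have hq1 : 1 ≤ q := by omega
  have hmq : (m : ℝ) = (q : ℝ) := by rw [hq]; simp
  have hqk : (q : ℝ) ≤ k := by rw [← hmq]; linarith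
  have hqp : (1 : ℝ) ≤ q := by exact_mod_cast hq1
  set δ : ℝ := (k : ℝ) - m * π with hδ
  have hδ1 : |δ| ≤ π / 2 := by
    rw [abs_le]
    have e : δ = ((k : ℝ) / π - m) * π := by rw [hδ, sub_mul, hkp]
    rw [e]
    constructor <;> nlinarith
  have hcos : |Real.cos k| = Real.cos δ := by
    have h1 : Real.cos δ = (-1) ^ m * Real.cos k := by rw [hδ]; exact Real.cos_sub_int_mul_pi _ _
    have h2 : 0 ≤ Real.cos δ :=
      Real.cos_nonneg_of_neg_pi_div_two_le_of_le (abs_le.1 hδ1).1 (abs_le.1 hδ1).2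
    rw [← abs_of_nonneg h2, h1, abs_mul]
    have : |((-1 : ℝ)) ^ m| = 1 := by rw [abs_zpow]; simp
    rw [this, one_mul]
  have hδ2 : c * (k : ℝ) ^ (1 - μ) ≤ |δ| := by
    have h1 := H k q hq1
    have h2 : |δ| = q * |π - (k : ℤ) / q| := by
      rw [← abs_of_nonneg (by positivity : (0 : ℝ) ≤ q), ← abs_mul, abs_of_nonneg
        (by positivity : (0 : ℝ) ≤ q), hδ, hmq, abs_sub_comm, mul_sub]
      congr 1
      push_cast
      field_simp
    rw [h2]
    calc c * (k : ℝ) ^ (1 - μ) ≤ c * (q : ℝ) ^ (1 - μ) := by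
          exact mul_le_mul_of_nonneg_left (Real.rpow_le_rpow_of_nonpos
            (by linarith : (0 : ℝ) < q) hqk (by linarith)) hc.le
      _ = q * (c / (q : ℝ) ^ μ) := by
          rw [Real.rpow_sub (by linarith : (0 : ℝ) < q), Real.rpow_one]; ring
      _ ≤ _ := by gcongr
  have hcos2 : |Real.cos k| ≤ exp (-(A * (k : ℝ) ^ (2 - 2 * μ))) := by
    rw [hcos]
    have h1 := Real.cos_le_one_sub_mul_cos_sq (x := δ) (by linarith)
    have h2 : A * (k : ℝ) ^ (2 - 2 * μ) ≤ 2 / π ^ 2 * δ ^ 2 := by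
      have e : (k : ℝ) ^ (2 - 2 * μ) = ((k : ℝ) ^ (1 - μ)) ^ 2 := by
        rw [← Real.rpow_natCast, ← Real.rpow_mul (by linarith)]
        congr 1
        push_cast
        ring
      rw [e, hA, mul_assoc, ← mul_pow, ← sq_abs δ]
      gcongr
    have h3 := Real.add_one_le_exp (-(A * (k : ℝ) ^ (2 - 2 * μ)))
    linarith
  calc |Real.cos k| ^ ((k : ℝ) ^ γ) ≤ exp (-(A * (k : ℝ) ^ (2 - 2 * μ))) ^ ((k : ℝ) ^ γ) := by
        gcongr
    _ = exp (-(A * (k : ℝ) ^ (γ + 2 - 2 * μ))) := by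
        rw [← Real.exp_mul]
        congr 1
        rw [show γ + 2 - 2 * μ = (2 - 2 * μ) + γ by ring,
          Real.rpow_add (by linarith : (0 : ℝ) < k)]
        ring

lemma abs_cos_pow_le (γ : ℝ) (k : ℕ) : |Real.cos k| ^ ((k : ℝ) ^ γ) ≤ 1 :=
  Real.rpow_le_one (_root_.abs_nonneg _) (Real.abs_cos_le_one _) (by positivity)

lemma nums_infinite {μ : ℝ} (hμ : 0 ≤ μ) (hf : (S μ).Infinite) :
    {k : ℕ | 1 ≤ k ∧ ∃ q : ℕ, 1 ≤ q ∧ (k : ℝ) ≤ 5 * q ∧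
      |π - k / q| < 1 / (q : ℝ) ^ μ}.Infinite := by
  intro hfin
  apply hf
  obtain ⟨N, hN⟩ := hfin.bddAbove
  have : S μ ⊆ (fun x : ℕ × ℕ => (x.1 : ℚ) / (x.2 : ℚ)) ''
      ((Set.Iic N) ×ˢ (Set.Iic N)) := by
    rintro r ⟨h1, h2⟩
    have p3 := pi_gt_three
    have p4 := pi_lt_four
    have hd := den_ge r
    have hd0 : (0 : ℝ) < r.den := by linarith
    have h3 : |π - (r : ℝ)| < 1 := by
      refine h2.trans_le ?_
      rw [div_le_one (by positivity)]
      exact Real.one_le_rpow hd hμ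
    rw [abs_lt] at h3
    have hr : (r : ℝ) = r.num / r.den := Rat.cast_def r
    have h4 : (2 : ℝ) * r.den < r.num := by
      have : 2 < (r.num : ℝ) / r.den := by rw [← hr]; linarith
      rwa [lt_div_iff₀ hd0] at this
    have h5 : (r.num : ℝ) ≤ 5 * r.den := by
      have : (r.num : ℝ) / r.den ≤ 5 := by rw [← hr]; linarith
      rwa [div_le_iff₀ hd0] at this
    have hnp : 0 < r.num := by
      have : (0 : ℝ) < r.num := by linarith
      exact_mod_cast this
    obtain ⟨k, hk⟩ := Int.eq_ofNat_of_zero_le hnp.le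
    have hk' : (r.num : ℝ) = (k : ℝ) := by rw [hk]; simp
    rw [hk'] at h4 h5 hr
    have hkN : k ≤ N := hN ⟨by omega, r.den, r.den_pos, h5, by rw [← hr]; exact h2⟩
    have hdk : r.den ≤ k := by
      have : (r.den : ℝ) ≤ k := by linarith
      exact_mod_cast this
    refine ⟨(k, r.den), ⟨hkN, hdk.trans hkN⟩, ?_⟩
    have := Rat.num_div_den r
    rw [hk] at this
    simpa using this
  exact (((Set.finite_Iic N).prod (Set.finite_Iic N)).image _).subset this

lemma limsup_one {μ γ : ℝ} (hf : (S μ).Infinite) (hγ0 : 0 ≤ γ) (hγ : γ < 2 * μ - 2) :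
    limsup (fun k : ℕ => |Real.cos k| ^ ((k : ℝ) ^ γ)) atTop = 1 := by
  have hfr := Nat.frequently_atTop_iff_infinite.2 (nums_infinite (by linarith) hf)
  set A : ℝ := (5 : ℝ) ^ (2 * μ - 2) with hA
  have hA0 : 0 < A := by positivity
  have key : ∀ k : ℕ, (1 ≤ k ∧ ∃ q : ℕ, 1 ≤ q ∧ (k : ℝ) ≤ 5 * q ∧
      |π - k / q| < 1 / (q : ℝ) ^ μ) →
      1 - A * (k : ℝ) ^ (-(2 * μ - 2 - γ)) ≤ |Real.cos k| ^ ((k : ℝ) ^ γ) := by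
    rintro k ⟨hk, q, hq, hkq, hlt⟩
    have hk1 : (1 : ℝ) ≤ k := by exact_mod_cast hk
    have hq1 : (1 : ℝ) ≤ q := by exact_mod_cast hq
    have hq0 : (0 : ℝ) < q := by linarith
    have hk0 : (0 : ℝ) < k := by linarith
    set δ : ℝ := (k : ℝ) - (q : ℤ) * π with hδ
    have hcos : |Real.cos k| = |Real.cos δ| := by
      have h1 : Real.cos δ = (-1) ^ (q : ℤ) * Real.cos k := by
        rw [hδ]; exact Real.cos_sub_int_mul_pi _ _
      rw [h1, abs_mul]
      have : |((-1 : ℝ)) ^ (q : ℤ)| = 1 := by rw [abs_zpow]; simp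
      rw [this, one_mul]
    have hδ1 : |δ| ≤ (q : ℝ) ^ (1 - μ) := by
      have h2 : |δ| = q * |π - k / q| := by
        rw [← abs_of_nonneg hq0.le, ← abs_mul, abs_of_nonneg hq0.le, hδ, abs_sub_comm, mul_sub]
        congr 1
        push_cast
        field_simp
      rw [h2, Real.rpow_sub hq0, Real.rpow_one, div_eq_mul_one_div (q : ℝ) ((q : ℝ) ^ μ)]
      exact mul_le_mul_of_nonneg_left hlt.le hq0.le
    have hδ2 : δ ^ 2 ≤ (q : ℝ) ^ (-(2 * μ - 2)) := by
      have e : (q : ℝ) ^ (-(2 * μ - 2)) = ((q : ℝ) ^ (1 - μ)) ^ 2 := by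
        rw [← Real.rpow_natCast, ← Real.rpow_mul hq0.le]
        congr 1
        push_cast
        ring
      rw [e, ← sq_abs]
      gcongr
    have hδ3 : (q : ℝ) ^ (-(2 * μ - 2)) ≤ A * (k : ℝ) ^ (-(2 * μ - 2)) := by
      have h1 : ((k : ℝ) / 5) ≤ q := by linarith
      have h2 := Real.rpow_le_rpow_of_nonpos (z := -(2 * μ - 2)) (by positivity) h1 (by linarith)
      refine h2.trans (le_of_eq ?_)
      rw [Real.div_rpow hk0.le (by norm_num), hA, Real.rpow_neg (by norm_num : (0 : ℝ) ≤ 5),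
        div_inv_eq_mul, mul_comm]
    have hδ4 : δ ^ 2 ≤ 1 := by
      refine hδ2.trans ?_
      exact Real.rpow_le_one_of_one_le_of_nonpos hq1 (by linarith)
    have hc1 : 1 - δ ^ 2 / 2 ≤ |Real.cos k| := by
      rw [hcos]
      exact (Real.one_sub_sq_div_two_le_cos).trans (le_abs_self _)
    have hb := one_add_mul_self_le_rpow_one_add (s := -(δ ^ 2 / 2)) (by linarith)
      (p := (k : ℝ) ^ γ) (Real.one_le_rpow hk1 hγ0)
    calc 1 - A * (k : ℝ) ^ (-(2 * μ - 2 - γ))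
        = 1 - (k : ℝ) ^ γ * (A * (k : ℝ) ^ (-(2 * μ - 2))) := by
          rw [show -(2 * μ - 2 - γ) = γ + -(2 * μ - 2) by ring, Real.rpow_add hk0]; ring
      _ ≤ 1 - (k : ℝ) ^ γ * (δ ^ 2 / 2) := by
          gcongr
          have := sq_nonneg δ
          linarith
      _ = 1 + (k : ℝ) ^ γ * (-(δ ^ 2 / 2)) := by ring
      _ ≤ (1 + -(δ ^ 2 / 2)) ^ ((k : ℝ) ^ γ) := hb
      _ ≤ |Real.cos k| ^ ((k : ℝ) ^ γ) := by
          gcongr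
          · linarith
          · linarith
  have hbdd : IsBoundedUnder (· ≤ ·) atTop
      (fun k : ℕ => |Real.cos k| ^ ((k : ℝ) ^ γ)) :=
    isBoundedUnder_of ⟨1, fun k => abs_cos_pow_le γ k⟩
  have hbdd' : IsBoundedUnder (· ≥ ·) atTop
      (fun k : ℕ => |Real.cos k| ^ ((k : ℝ) ^ γ)) :=
    isBoundedUnder_of ⟨0, fun k => by positivity⟩
  apply le_antisymm
  · exact limsup_le_of_le hbdd'.isCoboundedUnder_le
      (Eventually.of_forall fun k => abs_cos_pow_le γ k)
  · refine le_of_forall_lt fun b hb => ?_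
    obtain ⟨b', hb1, hb2⟩ := exists_between hb
    refine hb1.trans_le ?_
    have hlim : Tendsto (fun k : ℕ => 1 - A * (k : ℝ) ^ (-(2 * μ - 2 - γ))) atTop
        (nhds (1 - A * 0)) := by
      refine Tendsto.const_sub _ (Tendsto.const_mul _ ?_)
      exact (tendsto_rpow_neg_atTop (by linarith)).comp tendsto_natCast_atTop_atTop
    rw [mul_zero, sub_zero] at hlim
    have hev := hlim.eventually (lt_mem_nhds hb2)
    refine le_limsup_of_frequently_le ?_ hbdd
    exact (hfr.and_eventually hev).mono fun k hk => hk.2.le.trans (key k hk.1)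

end PiMeasure

/-- `sup Φ = 2 μ(π) - 2`, where
`Φ = {γ ≥ 0 : limsup_{k → ∞} |cos k| ^ (k ^ γ) = 1}`. -/
theorem sup_Phi_eq_two_mu_pi_sub_two :
    sSup {γ : ℝ | 0 ≤ γ ∧
        Filter.limsup (fun k : ℕ => |Real.cos k| ^ ((k : ℝ) ^ γ)) Filter.atTop = 1}
      = 2 * irrationalityMeasure Real.pi - 2 := by
  have hdef : irrationalityMeasure Real.pi = sInf {μ : ℝ | (PiMeasure.S μ).Finite} := rfl
  rw [hdef]
  set T : Set ℝ := {μ : ℝ | (PiMeasure.S μ).Finite} with hT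
  have hne : T.Nonempty := PiMeasure.S_finite
  have h2 : ∀ μ ∈ T, 2 < μ := by
    intro μ hμ
    by_contra h
    exact PiMeasure.S_infinite (not_lt.1 h) hμ
  have hbdd : BddBelow T := ⟨2, fun μ hμ => (h2 μ hμ).le⟩
  have hinf2 : 2 ≤ sInf T := le_csInf hne fun μ hμ => (h2 μ hμ).le
  have hub : ∀ γ ∈ {γ : ℝ | 0 ≤ γ ∧
      Filter.limsup (fun k : ℕ => |Real.cos k| ^ ((k : ℝ) ^ γ)) Filter.atTop = 1},
      γ ≤ 2 * sInf T - 2 := by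
    rintro γ ⟨_, hγ⟩
    by_contra h
    push Not at h
    obtain ⟨μ, hμ, hlt⟩ := exists_lt_of_csInf_lt hne (by linarith : sInf T < γ / 2 + 1)
    have := PiMeasure.tendsto_zero hμ (by linarith [h2 μ hμ]) (by linarith : 2 * μ - 2 < γ)
    rw [this.limsup_eq] at hγ
    norm_num at hγ
  have hlow : ∀ γ, 0 ≤ γ → γ < 2 * sInf T - 2 →
      Filter.limsup (fun k : ℕ => |Real.cos k| ^ ((k : ℝ) ^ γ)) Filter.atTop = 1 := by
    intro γ h0 hγ
    obtain ⟨μ, hμ1, hμ2⟩ := exists_between (by linarith : γ / 2 + 1 < sInf T)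
    have hn' : μ ∉ T := notMem_of_lt_csInf hμ2 hbdd
    have hn : (PiMeasure.S μ).Infinite := hn'
    exact PiMeasure.limsup_one hn h0 (by linarith)
  apply csSup_eq_of_forall_le_of_forall_lt_exists_gt
  · exact ⟨0, le_rfl, hlow 0 le_rfl (by linarith)⟩
  · exact hub
  · intro w hw
    obtain ⟨γ, h1, h3⟩ := exists_between (max_lt hw (by linarith : (0 : ℝ) < 2 * sInf T - 2))
    have h0 : 0 ≤ γ := ((le_max_right _ _).trans_lt h1).le
    exact ⟨γ, ⟨h0, hlow γ h0 h3⟩, (le_max_left _ _).trans_lt h1⟩
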